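/- Suppose ρ ∈ (0,1) is irrational and its continued fraction partial quotients satisfy aₙ ≤ n² for all sufficiently large n. Then there exist a constant c' > 0 and an integer q₀ ≥ 3 such that for all integers q ≥ q₀ and all integers p, |p − q·ρ| ≥ c' / ( q·(ln q)²·( ln( q·(ln q)² ) )² ). -/

import Mathlib

open MeasureTheory Filter

/-- The Gauss map `x ↦ {1/x}`. -/
noncomputable def gaussMap (x : ℝ) : ℝ := Int.fract (1 / x)

/-- The `n`-th continued fraction partial quotient of `ρ` (for `n ≥ 1`):
`aₙ(ρ) = ⌊1 / G^[n-1] ρ⌋` where `G` is the Gauss map. -/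
noncomputable def cfa (ρ : ℝ) (n : ℕ) : ℤ := ⌊1 / (gaussMap^[n - 1] ρ)⌋

/-- The Diophantine condition (2): `aₙ ≤ n²` for all sufficiently large `n`. -/
def DiophCond (ρ : ℝ) : Prop := ∃ N : ℕ, ∀ n : ℕ, N ≤ n → cfa ρ n ≤ (n : ℤ) ^ 2

/-- Denominators `qₙ` of the continued fraction convergents of `ρ`:
`q₀ = 1`, `q₁ = a₁`, `q_{n+2} = a_{n+2} q_{n+1} + qₙ`. -/
noncomputable def cfq (ρ : ℝ) : ℕ → ℤ
  | 0 => 1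
  | 1 => cfa ρ 1
  | n + 2 => cfa ρ (n + 2) * cfq ρ (n + 1) + cfq ρ n

/-- Numerators `pₙ` of the continued fraction convergents of `ρ`:
`p₀ = 0`, `p₁ = 1`, `p_{n+2} = a_{n+2} p_{n+1} + pₙ`. -/
noncomputable def cfp (ρ : ℝ) : ℕ → ℤ
  | 0 => 0
  | 1 => 1
  | n + 2 => cfa ρ (n + 2) * cfp ρ (n + 1) + cfp ρ n

/-- Distance from a real number to the nearest integer. -/
noncomputable def distNearestInt (t : ℝ) : ℝ := |t - round t|

/-!
Let `xₙ` be the `n`-th iterate of `ρ` under the Gauss map and `Dₙ = qₙ ρ - pₙ`. The recurrences give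
`Dₙ₊₁ = -xₙ₊₁ Dₙ`, so the errors alternate in sign and decrease in absolute value, and
`qₙ pₙ₊₁ - qₙ₊₁ pₙ = (-1)ⁿ`. By this unimodularity, `(p, q)` is an integer combination of
`(pₙ, qₙ)` and `(pₙ₊₁, qₙ₊₁)`; if `0 < q < qₙ₊₁`, the coefficients do not have the same sign and
the first one is nonzero, so their contributions to `q ρ - p` add up and `|q ρ - p| ≥ |Dₙ|`.
Moreover `(qₙ₊₁ + qₙ) |Dₙ| ≥ 1`. For `qₙ ≤ q < qₙ₊₁` this yields `|q ρ - p| ≥ 1 / (q (aₙ₊₁ + 2))`,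
and `n + 1 ≤ 5 log q` because the denominators grow at least like `2 ^ (n / 2)`. The bound
`aₙ ≤ n²` thus gives `|q ρ - p| ≥ c / (q (log q)²)`, which is more than what is claimed.
-/

section Logarithm

variable {q : ℝ}

lemma one_le_log_of_three_le (hq : 3 ≤ q) : 1 ≤ Real.log q :=
  (Real.le_log_iff_exp_le (by linarith)).2 (Real.exp_one_lt_three.le.trans hq)

lemma div_mul_log_sq_mul_log_sq_le (hq : 3 ≤ q) :
    1 / 27 / (q * Real.log q ^ 2 * Real.log (q * Real.log q ^ 2) ^ 2) ≤
      1 / (q * ((5 * Real.log q) ^ 2 + 2)) := by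
  have hlog : 1 ≤ Real.log q ^ 2 := one_le_pow₀ (one_le_log_of_three_le hq)
  have hloglog : 1 ≤ Real.log (q * Real.log q ^ 2) ^ 2 :=
    one_le_pow₀ (one_le_log_of_three_le (hq.trans (le_mul_of_one_le_right (by linarith) hlog)))
  have hden : q * ((5 * Real.log q) ^ 2 + 2) ≤
      27 * (q * Real.log q ^ 2 * Real.log (q * Real.log q ^ 2) ^ 2) :=
    calc q * ((5 * Real.log q) ^ 2 + 2) ≤ q * (27 * Real.log q ^ 2) := by
          gcongr
          linarith
      _ = 27 * (q * Real.log q ^ 2) := by ring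
      _ ≤ 27 * (q * Real.log q ^ 2 * Real.log (q * Real.log q ^ 2) ^ 2) := by
        grw [← hloglog, mul_one]
  rw [div_div]
  exact one_div_le_one_div_of_le (by positivity) hden

end Logarithm

section GaussMap

variable {ρ : ℝ}

lemma irrational_gaussMap (hirr : Irrational ρ) : Irrational (gaussMap ρ) := by
  have h : Irrational (1 / ρ) := one_div ρ ▸ hirr.inv
  exact h.sub_intCast ⌊1 / ρ⌋

lemma irrational_gaussMap_iterate (hirr : Irrational ρ) (n : ℕ) :
    Irrational (gaussMap^[n] ρ) :=
  Function.Iterate.rec Irrational hirr (fun _ h => irrational_gaussMap h) n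

lemma gaussMap_mem_Ioo (hirr : Irrational ρ) : gaussMap ρ ∈ Set.Ioo (0 : ℝ) 1 :=
  ⟨(Int.fract_nonneg _).lt_of_ne' (irrational_gaussMap hirr).ne_zero, Int.fract_lt_one _⟩

lemma gaussMap_iterate_succ_mem_Ioo (hirr : Irrational ρ) (n : ℕ) :
    gaussMap^[n + 1] ρ ∈ Set.Ioo (0 : ℝ) 1 := by
  rw [Function.iterate_succ_apply']
  exact gaussMap_mem_Ioo (irrational_gaussMap_iterate hirr n)

lemma gaussMap_iterate_mem_Ioo (hρ : ρ ∈ Set.Ioo (0 : ℝ) 1) (hirr : Irrational ρ) :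
    ∀ n, gaussMap^[n] ρ ∈ Set.Ioo (0 : ℝ) 1
  | 0 => hρ
  | n + 1 => gaussMap_iterate_succ_mem_Ioo hirr n

lemma cfa_succ_add_mul_gaussMap_iterate (hirr : Irrational ρ) (n : ℕ) :
    ((cfa ρ (n + 1) : ℝ) + gaussMap^[n + 1] ρ) * gaussMap^[n] ρ = 1 := by
  have h : (cfa ρ (n + 1) : ℝ) + gaussMap^[n + 1] ρ = 1 / gaussMap^[n] ρ := by
    rw [Function.iterate_succ_apply']
    exact Int.floor_add_fract _
  rw [h, one_div_mul_cancel (irrational_gaussMap_iterate hirr n).ne_zero]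

lemma one_le_cfa_succ (hρ : ρ ∈ Set.Ioo (0 : ℝ) 1) (hirr : Irrational ρ) (n : ℕ) :
    1 ≤ cfa ρ (n + 1) := by
  obtain ⟨hpos, hlt⟩ := gaussMap_iterate_mem_Ioo hρ hirr n
  rw [cfa, Nat.add_sub_cancel, Int.le_floor, Int.cast_one]
  exact (one_le_div hpos).2 hlt.le

end GaussMap

section Denominators

variable {ρ : ℝ}

lemma cfq_pos (hρ : ρ ∈ Set.Ioo (0 : ℝ) 1) (hirr : Irrational ρ) (n : ℕ) : 0 < cfq ρ n := by
  induction n using Nat.twoStepInduction with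
  | zero => exact one_pos
  | one => exact one_le_cfa_succ hρ hirr 0
  | more n ih ih' =>
    have ha : 0 < cfa ρ (n + 2) := one_le_cfa_succ hρ hirr (n + 1)
    rw [cfq]
    positivity

lemma cfq_add_le_cfq_add_two (hρ : ρ ∈ Set.Ioo (0 : ℝ) 1) (hirr : Irrational ρ) (n : ℕ) :
    cfq ρ (n + 1) + cfq ρ n ≤ cfq ρ (n + 2) := by
  rw [cfq]
  gcongr
  exact le_mul_of_one_le_left (cfq_pos hρ hirr _).le (one_le_cfa_succ hρ hirr _)

lemma monotone_cfq (hρ : ρ ∈ Set.Ioo (0 : ℝ) 1) (hirr : Irrational ρ) : Monotone (cfq ρ) := by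
  refine monotone_nat_of_le_succ fun n => ?_
  cases n with
  | zero => exact one_le_cfa_succ hρ hirr 0
  | succ n => linarith [cfq_add_le_cfq_add_two hρ hirr n, cfq_pos hρ hirr n]

lemma cfq_succ_le (hρ : ρ ∈ Set.Ioo (0 : ℝ) 1) (hirr : Irrational ρ) (n : ℕ) :
    cfq ρ (n + 1) ≤ (cfa ρ (n + 1) + 1) * cfq ρ n := by
  cases n with
  | zero => simp [cfq]
  | succ n =>
    rw [cfq, add_one_mul]
    gcongr
    exact monotone_cfq hρ hirr n.le_succ

lemma two_pow_le_two_mul_cfq_sq (hρ : ρ ∈ Set.Ioo (0 : ℝ) 1) (hirr : Irrational ρ) (n : ℕ) :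
    (2 : ℤ) ^ n ≤ 2 * cfq ρ n ^ 2 := by
  induction n using Nat.twoStepInduction with
  | zero => simp [cfq]
  | one => nlinarith [cfq_pos hρ hirr 1]
  | more n ih _ =>
    have hpos := cfq_pos hρ hirr n
    have hdouble : 2 * cfq ρ n ≤ cfq ρ (n + 2) := by
      linarith [cfq_add_le_cfq_add_two hρ hirr n, monotone_cfq hρ hirr n.le_succ]
    calc (2 : ℤ) ^ (n + 2) = 4 * 2 ^ n := by ring
      _ ≤ 2 * (2 * cfq ρ n) ^ 2 := by linarith
      _ ≤ 2 * cfq ρ (n + 2) ^ 2 := by gcongr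

lemma exists_lt_cfq (hρ : ρ ∈ Set.Ioo (0 : ℝ) 1) (hirr : Irrational ρ) (q : ℕ) :
    ∃ n, (q : ℤ) < cfq ρ n := by
  refine ⟨2 * q ^ 2, lt_of_pow_lt_pow_left₀ 2 (cfq_pos hρ hirr _).le ?_⟩
  have hlt : ((2 * q ^ 2 : ℕ) : ℤ) < 2 ^ (2 * q ^ 2) := mod_cast Nat.lt_two_pow_self
  have hgrowth := two_pow_le_two_mul_cfq_sq hρ hirr (2 * q ^ 2)
  push_cast at hlt
  linarith

lemma exists_cfq_le_lt_cfq_succ (hρ : ρ ∈ Set.Ioo (0 : ℝ) 1) (hirr : Irrational ρ) {q : ℕ}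
    (hq : 0 < q) : ∃ n, cfq ρ n ≤ q ∧ (q : ℤ) < cfq ρ (n + 1) := by
  have hzero : ¬ (q : ℤ) < cfq ρ 0 := by
    rw [cfq]
    omega
  obtain ⟨n, hn, hn'⟩ :=
    Nat.exists_not_and_succ_of_not_zero_of_exists hzero (exists_lt_cfq hρ hirr q)
  exact ⟨n, not_lt.1 hn, hn'⟩

lemma add_one_le_five_mul_log_of_cfq_le (hρ : ρ ∈ Set.Ioo (0 : ℝ) 1) (hirr : Irrational ρ)
    {n q : ℕ} (hq : 3 ≤ q) (hn : cfq ρ n ≤ q) : (n + 1 : ℝ) ≤ 5 * Real.log q := by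
  have hpow : (2 : ℝ) ^ n ≤ 2 * (q : ℝ) ^ 2 := by
    have hpos := cfq_pos hρ hirr n
    have : (2 : ℤ) ^ n ≤ 2 * (q : ℤ) ^ 2 :=
      (two_pow_le_two_mul_cfq_sq hρ hirr n).trans (by gcongr)
    exact_mod_cast this
  have hlog : n * Real.log 2 ≤ Real.log 2 + 2 * Real.log q := by
    have hq0 : (q : ℝ) ≠ 0 := by positivity
    have := Real.log_le_log (by positivity) hpow
    rwa [Real.log_mul two_ne_zero (pow_ne_zero 2 hq0), Real.log_pow, Real.log_pow] at this
  have hone : 1 ≤ Real.log q := one_le_log_of_three_le (mod_cast hq)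
  have htwo := Real.log_two_gt_d9
  have htwo' := Real.log_two_lt_d9
  refine le_of_mul_le_mul_right ?_ (Real.log_pos one_lt_two)
  nlinarith

end Denominators

section BestApproximation

variable {ρ : ℝ}

lemma cfq_mul_cfp_succ_sub (ρ : ℝ) (n : ℕ) :
    cfq ρ n * cfp ρ (n + 1) - cfq ρ (n + 1) * cfp ρ n = (-1) ^ n := by
  induction n with
  | zero => simp [cfq, cfp]
  | succ n ih =>
    rw [cfq, cfp, pow_succ, ← ih]
    ring

lemma exists_eq_mul_cfp_add_and_eq_mul_cfq_add (ρ : ℝ) (n : ℕ) (p q : ℤ) :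
    ∃ x y : ℤ, p = x * cfp ρ n + y * cfp ρ (n + 1) ∧ q = x * cfq ρ n + y * cfq ρ (n + 1) := by
  have hdet := cfq_mul_cfp_succ_sub ρ n
  have hsq : ((-1 : ℤ) ^ n) * (-1) ^ n = 1 := by rw [← mul_pow]; simp
  -- Cramer's rule; the determinant `(-1)ⁿ` is its own inverse.
  refine ⟨(-1) ^ n * (q * cfp ρ (n + 1) - p * cfq ρ (n + 1)),
    (-1) ^ n * (p * cfq ρ n - q * cfp ρ n), ?_, ?_⟩
  · linear_combination -(-1) ^ n * p * hdet - p * hsq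
  · linear_combination -(-1) ^ n * q * hdet - q * hsq

/-- The signed error `Dₙ = qₙ ρ - pₙ` of the `n`-th convergent, scaled by its denominator. -/
noncomputable def cfErr (ρ : ℝ) (n : ℕ) : ℝ := cfq ρ n * ρ - cfp ρ n

lemma cfErr_succ (hirr : Irrational ρ) (n : ℕ) :
    cfErr ρ (n + 1) = -gaussMap^[n + 1] ρ * cfErr ρ n := by
  induction n with
  | zero =>
    have hinv := cfa_succ_add_mul_gaussMap_iterate hirr 0
    simp only [Function.iterate_zero, id, cfErr, cfq, cfp, zero_add] at hinv ⊢
    push_cast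
    linear_combination hinv
  | succ n ih =>
    have hinv := cfa_succ_add_mul_gaussMap_iterate hirr (n + 1)
    have hrec : cfErr ρ (n + 2) = cfa ρ (n + 2) * cfErr ρ (n + 1) + cfErr ρ n := by
      simp only [cfErr, cfq, cfp]
      push_cast
      ring
    linear_combination hrec + ((cfa ρ (n + 2) : ℝ) + gaussMap^[n + 2] ρ) * ih - cfErr ρ n * hinv

lemma abs_cfErr_succ_le (hirr : Irrational ρ) (n : ℕ) :
    |cfErr ρ (n + 1)| ≤ |cfErr ρ n| := by
  obtain ⟨hpos, hlt⟩ := gaussMap_iterate_succ_mem_Ioo hirr n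
  rw [cfErr_succ hirr, abs_mul, abs_neg, abs_of_pos hpos]
  exact mul_le_of_le_one_left (abs_nonneg _) hlt.le

lemma one_le_cfq_add_mul_abs_cfErr (hρ : ρ ∈ Set.Ioo (0 : ℝ) 1) (hirr : Irrational ρ) (n : ℕ) :
    1 ≤ (cfq ρ (n + 1) + cfq ρ n : ℝ) * |cfErr ρ n| := by
  have hpos : (0 : ℝ) < cfq ρ n := mod_cast cfq_pos hρ hirr n
  have hpos' : (0 : ℝ) < cfq ρ (n + 1) := mod_cast cfq_pos hρ hirr (n + 1)
  have hdet : cfq ρ (n + 1) * cfErr ρ n - cfq ρ n * cfErr ρ (n + 1) = (-1) ^ n := by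
    have : (cfq ρ n * cfp ρ (n + 1) - cfq ρ (n + 1) * cfp ρ n : ℝ) = (-1) ^ n :=
      mod_cast cfq_mul_cfp_succ_sub ρ n
    rw [← this, cfErr, cfErr]
    ring
  calc (1 : ℝ) = |cfq ρ (n + 1) * cfErr ρ n - cfq ρ n * cfErr ρ (n + 1)| := by simp [hdet]
    _ ≤ |cfq ρ (n + 1) * cfErr ρ n| + |cfq ρ n * cfErr ρ (n + 1)| := abs_sub _ _
    _ = cfq ρ (n + 1) * |cfErr ρ n| + cfq ρ n * |cfErr ρ (n + 1)| := by
      rw [abs_mul, abs_mul, abs_of_pos hpos, abs_of_pos hpos']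
    _ ≤ cfq ρ (n + 1) * |cfErr ρ n| + cfq ρ n * |cfErr ρ n| := by
      grw [abs_cfErr_succ_le hirr n]
    _ = (cfq ρ (n + 1) + cfq ρ n) * |cfErr ρ n| := by ring

lemma ne_zero_and_mul_nonpos_of_mul_add_mul_mem_Ioo {a b x y : ℤ} (ha : 0 < a)
    (h : x * a + y * b ∈ Set.Ioo 0 b) : x ≠ 0 ∧ x * y ≤ 0 := by
  obtain ⟨hpos, hlt⟩ := h
  rcases lt_trichotomy y 0 with hy | rfl | hy
  · have hx : 0 < x := by
      by_contra! hx
      nlinarith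
    exact ⟨hx.ne', (mul_neg_of_pos_of_neg hx hy).le⟩
  · refine ⟨?_, (mul_zero x).le⟩
    rintro rfl
    simp at hpos
  · have hx : x < 0 := by
      by_contra! hx
      nlinarith
    exact ⟨hx.ne, (mul_neg_of_neg_of_pos hx hy).le⟩

lemma one_le_abs_sub_mul_of_mul_nonpos {x y : ℤ} {t : ℝ} (ht : 0 ≤ t) (hx : x ≠ 0)
    (hxy : x * y ≤ 0) : 1 ≤ |(x : ℝ) - y * t| := by
  have hsq : (1 : ℝ) ≤ (x : ℝ) ^ 2 := mod_cast Int.add_one_le_of_lt (by positivity : 0 < x ^ 2)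
  have hxy' : (x * y : ℝ) ≤ 0 := mod_cast hxy
  rw [← one_le_sq_iff_one_le_abs]
  nlinarith [mul_nonneg_of_nonpos_of_nonpos hxy' (neg_nonpos.2 ht), sq_nonneg (y * t)]

theorem abs_cfErr_le_abs_sub (hρ : ρ ∈ Set.Ioo (0 : ℝ) 1) (hirr : Irrational ρ) {n : ℕ} {q : ℤ}
    (hpos : 0 < q) (hlt : q < cfq ρ (n + 1)) (p : ℤ) : |cfErr ρ n| ≤ |(p : ℝ) - q * ρ| := by
  obtain ⟨x, y, rfl, rfl⟩ := exists_eq_mul_cfp_add_and_eq_mul_cfq_add ρ n p q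
  obtain ⟨hx, hxy⟩ := ne_zero_and_mul_nonpos_of_mul_add_mul_mem_Ioo (cfq_pos hρ hirr n) ⟨hpos, hlt⟩
  set t := gaussMap^[n + 1] ρ
  have ht : 0 ≤ t := (gaussMap_iterate_succ_mem_Ioo hirr n).1.le
  have hsum : ((x * cfp ρ n + y * cfp ρ (n + 1) : ℤ) : ℝ) -
      (x * cfq ρ n + y * cfq ρ (n + 1) : ℤ) * ρ = -((x - y * t) * cfErr ρ n) := by
    have hsucc := cfErr_succ hirr n
    simp only [cfErr] at hsucc ⊢
    push_cast
    linear_combination -(y : ℝ) * hsucc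
  rw [hsum, abs_neg, abs_mul]
  exact le_mul_of_one_le_left (abs_nonneg _) (one_le_abs_sub_mul_of_mul_nonpos ht hx hxy)

theorem one_div_mul_cfa_add_two_le_abs_sub (hρ : ρ ∈ Set.Ioo (0 : ℝ) 1) (hirr : Irrational ρ)
    {n : ℕ} {q : ℤ} (hle : cfq ρ n ≤ q) (hlt : q < cfq ρ (n + 1)) (p : ℤ) :
    1 / (q * (cfa ρ (n + 1) + 2) : ℝ) ≤ |(p : ℝ) - q * ρ| := by
  have hq : 0 < q := (cfq_pos hρ hirr n).trans_le hle
  have ha : 0 < cfa ρ (n + 1) := one_le_cfa_succ hρ hirr n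
  have hden : (cfq ρ (n + 1) + cfq ρ n : ℝ) ≤ q * (cfa ρ (n + 1) + 2) := by
    have : cfq ρ (n + 1) + cfq ρ n ≤ q * (cfa ρ (n + 1) + 2) :=
      calc cfq ρ (n + 1) + cfq ρ n ≤ (cfa ρ (n + 1) + 1) * cfq ρ n + cfq ρ n := by
            gcongr
            exact cfq_succ_le hρ hirr n
        _ = cfq ρ n * (cfa ρ (n + 1) + 2) := by ring
        _ ≤ q * (cfa ρ (n + 1) + 2) := by gcongr
    exact_mod_cast this
  rw [div_le_iff₀' (by positivity)]
  calc 1 ≤ (cfq ρ (n + 1) + cfq ρ n : ℝ) * |cfErr ρ n| := one_le_cfq_add_mul_abs_cfErr hρ hirr n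
    _ ≤ q * (cfa ρ (n + 1) + 2) * |(p : ℝ) - q * ρ| := by
      grw [hden, abs_cfErr_le_abs_sub hρ hirr hq hlt p]

end BestApproximation

theorem stmt_5_general {ρ : ℝ} (hρ : ρ ∈ Set.Ioo (0 : ℝ) 1) (hirr : Irrational ρ) {ψ : ℝ → ℝ}
    (hψ : MonotoneOn ψ (Set.Ici 0)) (hcfa : ∀ᶠ n : ℕ in atTop, (cfa ρ n : ℝ) ≤ ψ n) :
    ∀ᶠ q : ℕ in atTop, ∀ p : ℤ,
      1 / (q * (ψ (5 * Real.log q) + 2)) ≤ |(p : ℝ) - (q : ℝ) * ρ| := by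
  obtain ⟨N, hN⟩ := eventually_atTop.1 hcfa
  filter_upwards [eventually_ge_atTop 3, eventually_ge_atTop (cfq ρ N).toNat] with q hq hqN p
  obtain ⟨n, hle, hlt⟩ := exists_cfq_le_lt_cfq_succ hρ hirr (by omega : 0 < q)
  have hNn : N ≤ n + 1 :=
    ((monotone_cfq hρ hirr).reflect_lt (by omega : cfq ρ N < cfq ρ (n + 1))).le
  have hindex : ((n + 1 : ℕ) : ℝ) ≤ 5 * Real.log q :=
    mod_cast add_one_le_five_mul_log_of_cfq_le hρ hirr hq hle
  have hnonneg : (0 : ℝ) ≤ (n + 1 : ℕ) := Nat.cast_nonneg _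
  have hbound : (cfa ρ (n + 1) : ℝ) ≤ ψ (5 * Real.log q) :=
    (hN _ hNn).trans (hψ hnonneg (hnonneg.trans hindex) hindex)
  have ha : 0 < cfa ρ (n + 1) := one_le_cfa_succ hρ hirr n
  calc 1 / (q * (ψ (5 * Real.log q) + 2)) ≤ 1 / (q * (cfa ρ (n + 1) + 2) : ℝ) := by gcongr
    _ ≤ |(p : ℝ) - q * ρ| := mod_cast one_div_mul_cfa_add_two_le_abs_sub hρ hirr hle hlt p

/-- under the Diophantine condition (2), there exist `c' > 0` and an
integer `q₀ ≥ 3` such that `|p − q·ρ| ≥ c'/(q·(ln q)²·(ln(q·(ln q)²))²)` for all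
integers `q ≥ q₀` and all integers `p`. -/
theorem stmt_5 (ρ : ℝ) (hρ : ρ ∈ Set.Ioo (0 : ℝ) 1) (hirr : Irrational ρ)
    (hdioph : DiophCond ρ) :
    ∃ c' : ℝ, 0 < c' ∧ ∃ q₀ : ℕ, 3 ≤ q₀ ∧ ∀ q : ℕ, q₀ ≤ q → ∀ p : ℤ,
      c' / ((q : ℝ) * (Real.log q) ^ 2 *
          (Real.log ((q : ℝ) * (Real.log q) ^ 2)) ^ 2) ≤
        |(p : ℝ) - (q : ℝ) * ρ| := by
  obtain ⟨N, hN⟩ := hdioph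
  have hcfa : ∀ᶠ n : ℕ in atTop, (cfa ρ n : ℝ) ≤ (n : ℝ) ^ 2 :=
    eventually_atTop.2 ⟨N, fun n hn => mod_cast hN n hn⟩
  have hmono : MonotoneOn (fun x : ℝ => x ^ 2) (Set.Ici 0) := pow_left_monotoneOn
  obtain ⟨Q, hQ⟩ := eventually_atTop.1 (stmt_5_general hρ hirr hmono hcfa)
  refine ⟨1 / 27, by norm_num, max 3 Q, le_max_left 3 Q, fun q hq p => ?_⟩
  obtain ⟨hq3, hqQ⟩ := max_le_iff.1 hq
  exact (div_mul_log_sq_mul_log_sq_le (mod_cast hq3)).trans (hQ q hqQ p)
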